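/- arXiv:1403.0418 — 2 statements merged into one kernel-verified Lean document; each statement's English description precedes it below -/
import Mathlib

section
/- Let 0 ≤ c ≤ 1 and set s₁ = (3 − √(1+8c²))/4 and s₂ = √((1 − 4c² + √(1+8c²))/8). Then (a) ρ̃((c,0,0),(s₁,s₂,0)) is positive semidefinite, and (b) for all t₁, t₂ ∈ ℝ, if ρ̃((c,0,0),(t₁,t₂,0)) is positive semidefinite then |t₁t₂| ≤ s₁s₂. That is, among all physical equatorial-plane ellipses with centre (c,0,0), the maximal-area one has minor semiaxis s₁ (radial) and major semiaxis s₂. -/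
open Matrix Kronecker Polynomial
open scoped ComplexOrder

noncomputable section

/-- The Pauli matrices: `pauli 0 = I₂`, `pauli 1 = σ₁`, `pauli 2 = σ₂`, `pauli 3 = σ₃`. -/
def pauli : Fin 4 → Matrix (Fin 2) (Fin 2) ℂ
  | 0 => !![1, 0; 0, 1]
  | 1 => !![0, 1; 1, 0]
  | 2 => !![0, -Complex.I; Complex.I, 0]
  | 3 => !![1, 0; 0, -1]

/-- Euclidean norm of a vector in ℝ³. -/
def norm3 (v : Fin 3 → ℝ) : ℝ := Real.sqrt (∑ i, v i ^ 2)

/-- The canonical axis-aligned two-qubit operator with steering-ellipsoid centre `c`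
and signed semiaxes `t`:
`ρ̃(c,t) = (1/4)(I₄ + Σᵢ cᵢ (σᵢ⊗σ₀) + Σᵢ tᵢ (σᵢ⊗σᵢ))`. -/
def rhoTilde (c t : Fin 3 → ℝ) : Matrix (Fin 2 × Fin 2) (Fin 2 × Fin 2) ℂ :=
  (1 / 4 : ℂ) • ((1 : Matrix (Fin 2 × Fin 2) (Fin 2 × Fin 2) ℂ)
    + ∑ i : Fin 3, (c i : ℂ) • (pauli i.succ ⊗ₖ pauli 0)
    + ∑ i : Fin 3, (t i : ℂ) • (pauli i.succ ⊗ₖ pauli i.succ))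

/-! The Bell states split `ρ̃((c,0,0),t)` into two `2 × 2` blocks, one for each eigenvalue of
`σ₁ ⊗ σ₁`, so its positivity is that of two qubit operators `a + v · σ`, each of which is positive
exactly when its Bloch vector satisfies `‖v‖ ≤ a`. For `t₃ = 0` the two conditions combine into
`|t₁| + √(c² + t₂²) ≤ 1`. Hence `(t₁t₂)²` is at most `x² ((1 - x)² - c²)` with `x = |t₁|`. The
relevant critical point `s` of this polynomial satisfies `c² = (1 - s)(1 - 2s)`, which gives
`s = s₁`, and its maximality on `[0, 1]` is an explicit factorisation with the factor `(x - s)²`. -/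

section PosSemidef

variable {n R : Type*}

lemma posSemidef_smul_iff {α : Type*} [Ring R] [PartialOrder R] [StarRing R] [Semifield α]
    [PartialOrder α] [PosMulReflectLT α] [StarRing α] [StarOrderedRing α] [Algebra α R]
    [StarModule α R] [PosSMulMono α R] {M : Matrix n n R} {a : α} (ha : 0 < a) :
    (a • M).PosSemidef ↔ M.PosSemidef :=
  ⟨fun h => by simpa [smul_smul, ha.ne'] using h.smul (inv_nonneg.2 ha.le), fun h => h.smul ha.le⟩

lemma posSemidef_blockDiagonal_iff {o : Type*} [Finite n] [Finite o] [DecidableEq o] [Ring R]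
    [PartialOrder R] [IsOrderedAddMonoid R] [StarRing R] {M : o → Matrix n n R} :
    (blockDiagonal M).PosSemidef ↔ ∀ k, (M k).PosSemidef := by
  cases nonempty_fintype n
  cases nonempty_fintype o
  refine ⟨fun h k => ?_, fun h => ?_⟩
  · have hsub : (blockDiagonal M).submatrix (fun i => (i, k)) (fun i => (i, k)) = M k := by
      ext i j
      simp
    exact hsub ▸ h.submatrix _
  · refine .of_dotProduct_mulVec_nonneg
      (isHermitian_blockDiagonal_iff.2 fun k => (h k).isHermitian) fun x => ?_
    have hform : star x ⬝ᵥ (blockDiagonal M *ᵥ x) =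
        ∑ k, star (fun i => x (i, k)) ⬝ᵥ (M k *ᵥ fun i => x (i, k)) := by
      simp [dotProduct, mulVec, Fintype.sum_prod_type_right, blockDiagonal_apply]
    rw [hform]
    exact Finset.sum_nonneg fun k _ => (h k).dotProduct_mulVec_nonneg _

lemma posSemidef_fin_two_iff {𝕜 : Type*} [RCLike 𝕜] {A : Matrix (Fin 2) (Fin 2) 𝕜}
    (hA : A.IsHermitian) : A.PosSemidef ↔ 0 ≤ A.trace ∧ 0 ≤ A.det := by
  refine ⟨fun h => ⟨h.trace_nonneg, h.det_nonneg⟩, fun ⟨htr, hdet⟩ => ?_⟩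
  rw [hA.trace_eq_sum_eigenvalues, Fin.sum_univ_two] at htr
  rw [hA.det_eq_prod_eigenvalues, Fin.prod_univ_two] at hdet
  have hsum : 0 ≤ hA.eigenvalues 0 + hA.eigenvalues 1 := by exact_mod_cast htr
  have hprod : 0 ≤ hA.eigenvalues 0 * hA.eigenvalues 1 := by exact_mod_cast hdet
  rw [hA.posSemidef_iff_eigenvalues_nonneg, Pi.le_def, Fin.forall_fin_two]
  constructor <;> simp only [Pi.zero_apply] <;> nlinarith

end PosSemidef

section Qubit

/-- The qubit operator `a + v · σ`, for which `‖v‖ ≤ a` describes the Bloch ball of radius `a`. No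
factor `1/2` is included, so its trace is `2a`. -/
def blochOperator (a : ℝ) (v : Fin 3 → ℝ) : Matrix (Fin 2) (Fin 2) ℂ :=
  (a : ℂ) • pauli 0 + ∑ i : Fin 3, (v i : ℂ) • pauli i.succ

lemma blochOperator_eq (a : ℝ) (v : Fin 3 → ℝ) :
    blochOperator a v =
      !![(a : ℂ) + v 2, v 0 - v 1 * Complex.I; v 0 + v 1 * Complex.I, a - v 2] := by
  ext i j
  fin_cases i <;> fin_cases j <;>
    simp [blochOperator, pauli, Fin.sum_univ_three, sub_eq_add_neg]

lemma isHermitian_blochOperator (a : ℝ) (v : Fin 3 → ℝ) : (blochOperator a v).IsHermitian := by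
  ext i j
  fin_cases i <;> fin_cases j <;> simp [blochOperator_eq, sub_eq_add_neg]

lemma trace_blochOperator (a : ℝ) (v : Fin 3 → ℝ) :
    (blochOperator a v).trace = ((2 * a : ℝ) : ℂ) := by
  rw [blochOperator_eq, trace_fin_two_of]
  push_cast
  ring

lemma det_blochOperator (a : ℝ) (v : Fin 3 → ℝ) :
    (blochOperator a v).det = ((a ^ 2 - ∑ i, v i ^ 2 : ℝ) : ℂ) := by
  rw [blochOperator_eq, det_fin_two_of, Fin.sum_univ_three]
  push_cast
  linear_combination (v 1 : ℂ) ^ 2 * Complex.I_sq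

lemma posSemidef_blochOperator_iff {a : ℝ} {v : Fin 3 → ℝ} :
    (blochOperator a v).PosSemidef ↔ norm3 v ≤ a := by
  rw [posSemidef_fin_two_iff (isHermitian_blochOperator a v), trace_blochOperator,
    det_blochOperator, Complex.zero_le_real, Complex.zero_le_real, norm3, Real.sqrt_le_iff,
    sub_nonneg, mul_nonneg_iff_of_pos_left two_pos]

end Qubit

section BellBasis

/-- The unnormalised Bell basis, as the columns of a matrix: the column `(i, k)` is
`|0,i⟩ + (-1)ᵏ |1,1+i⟩`, so that `k` indexes the eigenvalue `(-1)ᵏ` of `σ₁ ⊗ σ₁`. -/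
def bellMatrix : Matrix (Fin 2 × Fin 2) (Fin 2 × Fin 2) ℂ :=
  of fun p q => if p.2 = p.1 + q.1 then (-1) ^ (p.1 * q.2 : ℕ) else 0

lemma bellMatrix_mul_star : bellMatrix * star bellMatrix = (2 : ℂ) • 1 := by
  ext ⟨i, j⟩ ⟨k, l⟩
  fin_cases i <;> fin_cases j <;> fin_cases k <;> fin_cases l <;>
    simp [bellMatrix, mul_apply, Fintype.sum_prod_type, star_apply, one_apply] <;> norm_num

lemma isUnit_bellMatrix : IsUnit bellMatrix := by
  refine IsUnit.of_mul_eq_one ((1 / 2 : ℂ) • star bellMatrix) ?_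
  simp [bellMatrix_mul_star, smul_smul]

lemma rhoTilde_eq_bellMatrix_mul (c t₁ t₂ t₃ : ℝ) :
    rhoTilde ![c, 0, 0] ![t₁, t₂, t₃] =
      (1 / 8 : ℝ) • (bellMatrix * blockDiagonal ![blochOperator (1 + t₁) ![c, 0, t₃ - t₂],
        blochOperator (1 - t₁) ![-c, 0, t₃ + t₂]] * star bellMatrix) := by
  ext ⟨i, j⟩ ⟨k, l⟩
  fin_cases i <;> fin_cases j <;> fin_cases k <;> fin_cases l <;>
    simp [rhoTilde, pauli, bellMatrix, blochOperator_eq, mul_apply, Fintype.sum_prod_type,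
      Fin.sum_univ_three, star_apply, one_apply, blockDiagonal_apply] <;> ring

lemma posSemidef_rhoTilde_axial_iff {c t₁ t₂ t₃ : ℝ} :
    (rhoTilde ![c, 0, 0] ![t₁, t₂, t₃]).PosSemidef ↔
      √(c ^ 2 + (t₃ - t₂) ^ 2) ≤ 1 + t₁ ∧ √(c ^ 2 + (t₃ + t₂) ^ 2) ≤ 1 - t₁ := by
  rw [rhoTilde_eq_bellMatrix_mul, posSemidef_smul_iff (by norm_num),
    IsUnit.posSemidef_star_right_conjugate_iff isUnit_bellMatrix, posSemidef_blockDiagonal_iff]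
  simp [Fin.forall_fin_two, posSemidef_blochOperator_iff, norm3, Fin.sum_univ_three]

lemma posSemidef_rhoTilde_equatorial_iff {c t₁ t₂ : ℝ} :
    (rhoTilde ![c, 0, 0] ![t₁, t₂, 0]).PosSemidef ↔ |t₁| + √(c ^ 2 + t₂ ^ 2) ≤ 1 := by
  rw [posSemidef_rhoTilde_axial_iff, ← le_sub_iff_add_le, le_sub_comm, abs_le]
  simp only [zero_sub, zero_add, neg_sq]
  constructor <;> rintro ⟨h₁, h₂⟩ <;> constructor <;> linarith

end BellBasis

section MaximalArea

/-- The radial semiaxis `s₁` of the maximal-area ellipse. -/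
def minorSemiaxis (c : ℝ) : ℝ := (3 - √(1 + 8 * c ^ 2)) / 4

/-- The tangential semiaxis `s₂` of the maximal-area ellipse. It is the root of a negative number,
hence `0`, when `1 < |c|`. -/
def majorSemiaxis (c : ℝ) : ℝ := √((1 - 4 * c ^ 2 + √(1 + 8 * c ^ 2)) / 8)

variable {c : ℝ}

lemma minorSemiaxis_nonneg (hc : |c| ≤ 1) : 0 ≤ minorSemiaxis c := by
  have hroot : √(1 + 8 * c ^ 2) ≤ 3 :=
    Real.sqrt_le_iff.2 ⟨by norm_num, by linarith [(sq_le_one_iff_abs_le_one c).2 hc]⟩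
  unfold minorSemiaxis
  linarith

lemma minorSemiaxis_le_half (c : ℝ) : minorSemiaxis c ≤ 1 / 2 := by
  have hroot : 1 ≤ √(1 + 8 * c ^ 2) := Real.one_le_sqrt.2 (by linarith [sq_nonneg c])
  unfold minorSemiaxis
  linarith

lemma one_sub_minorSemiaxis_mul (c : ℝ) :
    (1 - minorSemiaxis c) * (1 - 2 * minorSemiaxis c) = c ^ 2 := by
  unfold minorSemiaxis
  linear_combination (1 / 8) * Real.sq_sqrt (show 0 ≤ 1 + 8 * c ^ 2 by positivity)

lemma majorSemiaxis_sq (hc : |c| ≤ 1) :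
    majorSemiaxis c ^ 2 = minorSemiaxis c * (1 - minorSemiaxis c) := by
  have hrad : (1 - 4 * c ^ 2 + √(1 + 8 * c ^ 2)) / 8 =
      minorSemiaxis c * (1 - minorSemiaxis c) := by
    have hroot := one_sub_minorSemiaxis_mul c
    unfold minorSemiaxis at hroot ⊢
    linear_combination (1 / 2) * hroot
  rw [majorSemiaxis, hrad, Real.sq_sqrt]
  exact mul_nonneg (minorSemiaxis_nonneg hc) (by linarith [minorSemiaxis_le_half c])

lemma minorSemiaxis_add_sqrt (hc : |c| ≤ 1) :
    minorSemiaxis c + √(c ^ 2 + majorSemiaxis c ^ 2) = 1 := by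
  have hsq : c ^ 2 + majorSemiaxis c ^ 2 = (1 - minorSemiaxis c) ^ 2 := by
    rw [majorSemiaxis_sq hc, ← one_sub_minorSemiaxis_mul c]
    ring
  rw [hsq, Real.sqrt_sq (by linarith [minorSemiaxis_le_half c])]
  ring

lemma sq_mul_one_sub_sq_sub_le {x s : ℝ} (hx₀ : 0 ≤ x) (hx₁ : x ≤ 1) (hs₀ : 0 ≤ s)
    (hs₁ : s ≤ 1 / 2) :
    x ^ 2 * ((1 - x) ^ 2 - (1 - s) * (1 - 2 * s)) ≤ s ^ 2 * (s * (1 - s)) := by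
  have hfactor : s ^ 2 * (s * (1 - s)) - x ^ 2 * ((1 - x) ^ 2 - (1 - s) * (1 - 2 * s)) =
      (x - s) ^ 2 * (x * (1 - x) + x * (1 - 2 * s) + s * (1 - s)) := by ring
  have hnonneg : 0 ≤ x * (1 - x) + x * (1 - 2 * s) + s * (1 - s) :=
    add_nonneg (add_nonneg (mul_nonneg hx₀ (by linarith)) (mul_nonneg hx₀ (by linarith)))
      (mul_nonneg hs₀ (by linarith))
  rw [← sub_nonneg, hfactor]
  exact mul_nonneg (sq_nonneg _) hnonneg

lemma abs_mul_le_minorSemiaxis_mul_majorSemiaxis {x y : ℝ} (h : |x| + √(c ^ 2 + y ^ 2) ≤ 1) :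
    |x * y| ≤ minorSemiaxis c * majorSemiaxis c := by
  obtain ⟨hx, hsq⟩ := Real.sqrt_le_iff.1 (le_sub_iff_add_le'.2 h)
  have hx₁ : |x| ≤ 1 := sub_nonneg.1 hx
  have hc : |c| ≤ 1 := by
    rw [← sq_le_one_iff_abs_le_one]
    nlinarith [abs_nonneg x, sq_nonneg y]
  have hs₀ := minorSemiaxis_nonneg hc
  refine abs_le_of_sq_le_sq ?_ (mul_nonneg hs₀ (Real.sqrt_nonneg _))
  calc (x * y) ^ 2 = |x| ^ 2 * y ^ 2 := by rw [mul_pow, sq_abs]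
    _ ≤ |x| ^ 2 * ((1 - |x|) ^ 2 - c ^ 2) := by gcongr; linarith
    _ ≤ minorSemiaxis c ^ 2 * (minorSemiaxis c * (1 - minorSemiaxis c)) := by
      rw [← one_sub_minorSemiaxis_mul c]
      exact sq_mul_one_sub_sq_sub_le (abs_nonneg x) hx₁ hs₀ (minorSemiaxis_le_half c)
    _ = (minorSemiaxis c * majorSemiaxis c) ^ 2 := by rw [mul_pow, majorSemiaxis_sq hc]

end MaximalArea

theorem stmt4_general (c : ℝ) (hc : |c| ≤ 1) :
    (rhoTilde ![c, 0, 0] ![minorSemiaxis c, majorSemiaxis c, 0]).PosSemidef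
    ∧ ∀ t₁ t₂ : ℝ, (rhoTilde ![c, 0, 0] ![t₁, t₂, 0]).PosSemidef →
        |t₁ * t₂| ≤ minorSemiaxis c * majorSemiaxis c := by
  refine ⟨?_, fun t₁ t₂ h =>
    abs_mul_le_minorSemiaxis_mul_majorSemiaxis (posSemidef_rhoTilde_equatorial_iff.1 h)⟩
  rw [posSemidef_rhoTilde_equatorial_iff, abs_of_nonneg (minorSemiaxis_nonneg hc)]
  exact (minorSemiaxis_add_sqrt hc).le

/-- The maximal-area physical equatorial-plane ellipse with centre `(c,0,0)` has radial
minor semiaxis `s₁ = (3 − √(1+8c²))/4` and major semiaxis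
`s₂ = √((1 − 4c² + √(1+8c²))/8)`. -/
theorem stmt4 (c : ℝ) (hc0 : 0 ≤ c) (hc1 : c ≤ 1) :
    (rhoTilde ![c, 0, 0]
        ![(3 - Real.sqrt (1 + 8 * c ^ 2)) / 4,
          Real.sqrt ((1 - 4 * c ^ 2 + Real.sqrt (1 + 8 * c ^ 2)) / 8), 0]).PosSemidef
    ∧ ∀ t₁ t₂ : ℝ, (rhoTilde ![c, 0, 0] ![t₁, t₂, 0]).PosSemidef →
        |t₁ * t₂| ≤ (3 - Real.sqrt (1 + 8 * c ^ 2)) / 4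
          * Real.sqrt ((1 - 4 * c ^ 2 + Real.sqrt (1 + 8 * c ^ 2)) / 8) :=
  stmt4_general c (abs_le.2 ⟨by linarith, hc1⟩)
end
end

section
/- Let ρ be a 4×4 positive semidefinite complex matrix of unit trace (a two-qubit state) with ‖b‖ < 1. Then γ_b⁴ |det Θ(ρ)| ≤ (1 − ‖c_A‖)²; equivalently, the steering-ellipsoid volume satisfies V_A ≤ (4π/3)(1 − ‖c_A‖)². In particular any operator of this form whose ellipsoid volume exceeds (4π/3)(1 − ‖c_A‖)² is unphysical. -/
open Matrix Kronecker Polynomial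
open scoped ComplexOrder

noncomputable section

/-- The Pauli-basis expansion matrix `Θ(ρ)_{μν} = Re tr(ρ (σ_μ ⊗ σ_ν))`. -/
def Theta (ρ : Matrix (Fin 2 × Fin 2) (Fin 2 × Fin 2) ℂ) : Matrix (Fin 4) (Fin 4) ℝ :=
  Matrix.of fun μ ν => ((ρ * (pauli μ ⊗ₖ pauli ν)).trace).re

/-! In the basis of matrix units `Θ(ρ)` becomes the realignment of `ρ`, whence
`|det Θ(ρ)| = 16 |det (realign ρ)|`, and a local operation `A ⊗ B` multiplies this determinant by
`|det A|⁴ |det B|⁴`. Let `D` be Bob's reduced state and `K` Alice's conditional state for Bob's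
effect `adj D`. Then `|det (realign ρ)| ≤ (K i i)²`: an operation `B` of Bob scales both sides by
`|det B|⁴`, so he may normalise `D` to `1` and diagonalise one diagonal block, hence both; the
determinant then factorises and the 2×2 principal minors of `ρ` bound it. A unitary of Alice turns
`K i i` into any eigenvalue of `K = (1 - ‖b‖²) / 4 • (1 + c_A · σ)`, and the smaller one is
`(1 - ‖b‖²) (1 - ‖c_A‖) / 4`. -/

section LocalOperations

variable {m n R : Type*}

/-- The realignment (operator Schmidt reshuffling) of a bipartite matrix: the rows of `realign ρ`
are indexed by the index pair of the first factor, its columns by that of the second. -/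
def realign (ρ : Matrix (m × n) (m × n) R) : Matrix (m × m) (n × n) R :=
  of fun p q => ρ (p.1, q.1) (p.2, q.2)

/-- The operator `⟨i|ρ|j⟩` on the second factor of a bipartite matrix `ρ`. -/
def blockAt (ρ : Matrix (m × n) (m × n) R) (i j : m) : Matrix n n R :=
  ρ.submatrix (Prod.mk i) (Prod.mk j)

/-- The partial trace over the first factor: Bob's reduced state. -/
def traceFst [Fintype m] [AddCommMonoid R] (ρ : Matrix (m × n) (m × n) R) : Matrix n n R :=
  ∑ i, blockAt ρ i i

/-- Alice's unnormalised conditional state `Tr_B (ρ (1 ⊗ E))` after Bob observes the effect `E`. -/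
def steered [Fintype n] [NonUnitalNonAssocSemiring R] (ρ : Matrix (m × n) (m × n) R)
    (E : Matrix n n R) : Matrix m m R :=
  of fun i j => (blockAt ρ i j * E).trace

theorem conjTranspose_steered [Fintype n] [CommSemiring R] [StarRing R]
    (ρ : Matrix (m × n) (m × n) R) (E : Matrix n n R) : (steered ρ E)ᴴ = steered ρᴴ Eᴴ := by
  ext i j
  rw [conjTranspose_apply, steered, of_apply, ← trace_conjTranspose, conjTranspose_mul,
    trace_mul_comm]
  rfl

variable [Fintype m] [Fintype n]

theorem sum_prod_sum_prod_comm [AddCommMonoid R] (f : m → n → m → n → R) :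
    ∑ x : m × n, ∑ y : m × n, f x.1 x.2 y.1 y.2 = ∑ p : m × m, ∑ q : n × n, f p.1 q.1 p.2 q.2 := by
  rw [← Fintype.sum_prod_type', ← Fintype.sum_prod_type']
  exact Fintype.sum_equiv (Equiv.prodProdProdComm m n m n) _ _ fun _ => rfl

theorem trace_mul_kronecker [CommSemiring R] (ρ : Matrix (m × n) (m × n) R) (A : Matrix m m R)
    (B : Matrix n n R) : (ρ * (A ⊗ₖ B)).trace = vec A ⬝ᵥ realign ρ *ᵥ vec B := by
  simp only [trace, diag_apply, mul_apply, kroneckerMap_apply, dotProduct, mulVec, vec, realign,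
    of_apply, Finset.mul_sum]
  rw [sum_prod_sum_prod_comm fun i k j l => ρ (i, k) (j, l) * (A j i * B l k)]
  exact Finset.sum_congr rfl fun p _ => Finset.sum_congr rfl fun q _ => by ring

theorem realign_kronecker_mul_mul_kronecker [CommSemiring R] (A C : Matrix m m R)
    (B D : Matrix n n R) (ρ : Matrix (m × n) (m × n) R) :
    realign ((A ⊗ₖ B) * ρ * (C ⊗ₖ D)) = (A ⊗ₖ Cᵀ) * realign ρ * (Bᵀ ⊗ₖ D) := by
  ext ⟨i, i'⟩ ⟨j, j'⟩
  simp only [realign, mul_apply, kroneckerMap_apply, of_apply, transpose_apply, Finset.sum_mul]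
  rw [Finset.sum_comm, Finset.sum_comm (s := (Finset.univ : Finset (n × n))),
    sum_prod_sum_prod_comm fun k l k' l' =>
      A i k * B j l * ρ (k, l) (k', l') * (C k' i' * D l' j')]
  exact Finset.sum_congr rfl fun p _ => Finset.sum_congr rfl fun q _ => by ring

theorem det_realign_kronecker_mul_mul_kronecker [CommRing R] [DecidableEq n]
    (A B C D : Matrix n n R) (ρ : Matrix (n × n) (n × n) R) :
    (realign ((A ⊗ₖ B) * ρ * (C ⊗ₖ D))).det =
      (A.det * B.det * C.det * D.det) ^ Fintype.card n * (realign ρ).det := by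
  rw [realign_kronecker_mul_mul_kronecker, det_mul, det_mul, det_kronecker, det_kronecker,
    det_transpose, det_transpose]
  ring

theorem trace_steered_mul [CommSemiring R] (ρ : Matrix (m × n) (m × n) R) (E : Matrix n n R)
    (X : Matrix m m R) : (steered ρ E * X).trace = (ρ * (X ⊗ₖ E)).trace := by
  simp only [steered, blockAt, trace, diag_apply, mul_apply, of_apply, submatrix_apply,
    kroneckerMap_apply, Fintype.sum_prod_type, Finset.sum_mul]
  refine Finset.sum_congr rfl fun i _ => ?_
  rw [Finset.sum_comm]
  exact Finset.sum_congr rfl fun k _ => Finset.sum_congr rfl fun j _ =>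
    Finset.sum_congr rfl fun l _ => by ring

theorem trace_blockAt_mul [CommSemiring R] [DecidableEq m] (ρ : Matrix (m × n) (m × n) R)
    (i j : m) (Y : Matrix n n R) :
    (blockAt ρ i j * Y).trace = (ρ * (single j i 1 ⊗ₖ Y)).trace := by
  rw [← trace_steered_mul, trace_mul_single]
  simp [steered]

theorem trace_traceFst_mul [CommSemiring R] [DecidableEq m] (ρ : Matrix (m × n) (m × n) R)
    (Y : Matrix n n R) : (traceFst ρ * Y).trace = (ρ * ((1 : Matrix m m R) ⊗ₖ Y)).trace := by
  rw [← trace_steered_mul, Matrix.mul_one, traceFst, Matrix.sum_mul, trace_sum]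
  rfl

theorem trace_kronecker_mul_mul_kronecker_mul [CommSemiring R] (A C X : Matrix m m R)
    (B D Y : Matrix n n R) (ρ : Matrix (m × n) (m × n) R) :
    ((A ⊗ₖ B) * ρ * (C ⊗ₖ D) * (X ⊗ₖ Y)).trace =
      (ρ * ((C * X * A) ⊗ₖ (D * Y * B))).trace := by
  rw [Matrix.mul_assoc, Matrix.mul_assoc, trace_mul_comm, Matrix.mul_assoc, mul_kronecker_mul,
    mul_kronecker_mul]

theorem blockAt_one_kronecker_mul_mul_one_kronecker [CommSemiring R] [DecidableEq m]
    (B D : Matrix n n R) (ρ : Matrix (m × n) (m × n) R) (i j : m) :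
    blockAt ((1 ⊗ₖ B) * ρ * (1 ⊗ₖ D)) i j = B * blockAt ρ i j * D := by
  refine ext_iff_trace_mul_right.mpr fun Y => ?_
  rw [trace_blockAt_mul, trace_kronecker_mul_mul_kronecker_mul, Matrix.one_mul, Matrix.mul_one,
    ← trace_blockAt_mul, ← Matrix.mul_assoc, trace_mul_cycle, ← Matrix.mul_assoc,
    Matrix.mul_assoc B]

theorem traceFst_one_kronecker_mul_mul_one_kronecker [CommSemiring R] [DecidableEq m]
    (B D : Matrix n n R) (ρ : Matrix (m × n) (m × n) R) :
    traceFst ((1 ⊗ₖ B) * ρ * (1 ⊗ₖ D)) = B * traceFst ρ * D := by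
  simp only [traceFst, blockAt_one_kronecker_mul_mul_one_kronecker, Matrix.mul_sum, Matrix.sum_mul]

theorem traceFst_kronecker_one_mul_mul_kronecker_one [CommSemiring R] [DecidableEq m]
    [DecidableEq n] {A C : Matrix m m R} (h : C * A = 1) (ρ : Matrix (m × n) (m × n) R) :
    traceFst ((A ⊗ₖ 1) * ρ * (C ⊗ₖ 1)) = traceFst ρ := by
  refine ext_iff_trace_mul_right.mpr fun Y => ?_
  rw [trace_traceFst_mul, trace_kronecker_mul_mul_kronecker_mul, Matrix.mul_one, h, Matrix.one_mul,
    Matrix.mul_one, trace_traceFst_mul]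

theorem steered_kronecker_one_mul_mul_kronecker_one [CommSemiring R] [DecidableEq n]
    (A C : Matrix m m R) (ρ : Matrix (m × n) (m × n) R) (E : Matrix n n R) :
    steered ((A ⊗ₖ 1) * ρ * (C ⊗ₖ 1)) E = A * steered ρ E * C := by
  refine ext_iff_trace_mul_right.mpr fun X => ?_
  rw [trace_steered_mul, trace_kronecker_mul_mul_kronecker_mul, Matrix.one_mul, Matrix.mul_one,
    ← trace_steered_mul, ← Matrix.mul_assoc, trace_mul_cycle, ← Matrix.mul_assoc,
    Matrix.mul_assoc A]

end LocalOperations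

section MatrixLemmas

variable {n 𝕜 R : Type*} [RCLike 𝕜]

theorem norm_apply_mul_apply_le_of_posSemidef {M : Matrix n n 𝕜} (hM : M.PosSemidef) (i j : n) :
    ‖M i j * M j i‖ ≤ ‖M i i * M j j‖ := by
  have minor_le : M i j * M j i ≤ M i i * M j j := by
    have minor_nonneg := (hM.submatrix ![i, j]).det_nonneg
    rwa [det_fin_two, sub_nonneg] at minor_nonneg
  have coherence_nonneg : 0 ≤ M i j * M j i := by
    rw [← hM.isHermitian.apply i j]
    exact star_mul_self_nonneg _
  rwa [← RCLike.ofReal_le_ofReal (K := 𝕜), RCLike.norm_of_nonneg' coherence_nonneg,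
    RCLike.norm_of_nonneg' (coherence_nonneg.trans minor_le)]

variable [Fintype n] [DecidableEq n]

theorem trace_mul_mul_mul_adjugate [CommRing R] (A B M N : Matrix n n R) :
    (A * M * B * adjugate (A * N * B)).trace = A.det * B.det * (M * adjugate N).trace := by
  have regroup : A * M * B * adjugate (A * N * B) =
      A * (M * (B * adjugate B) * adjugate N) * adjugate A := by
    simp only [adjugate_mul_distrib, Matrix.mul_assoc]
  rw [regroup, mul_adjugate, trace_mul_cycle, adjugate_mul]
  simp only [smul_mul_assoc, mul_smul_comm, Matrix.one_mul, Matrix.mul_one, trace_smul, smul_eq_mul]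
  ring

theorem exists_unitary_conj_eq_diagonal_eigenvalues {K : Matrix n n 𝕜} (hK : K.IsHermitian) :
    ∃ U : Matrix n n 𝕜, U * Uᴴ = 1 ∧ Uᴴ * U = 1 ∧
      U * K * Uᴴ = diagonal fun i => (hK.eigenvalues i : 𝕜) := by
  refine ⟨star (hK.eigenvectorUnitary : Matrix n n 𝕜), ?_, ?_, ?_⟩
  · simp [← star_eq_conjTranspose]
  · simp [← star_eq_conjTranspose]
  · simpa [Unitary.conjStarAlgAut_apply, ← star_eq_conjTranspose, Function.comp_def] using
      hK.conjStarAlgAut_star_eigenvectorUnitary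

open scoped MatrixOrder Matrix.Norms.L2Operator in
theorem exists_mul_mul_conjTranspose_eq_one_and_isDiag {D Q : Matrix n n 𝕜} (hD : D.PosDef)
    (hQ : Q.IsHermitian) : ∃ B : Matrix n n 𝕜, B * D * Bᴴ = 1 ∧ (B * Q * Bᴴ).IsDiag := by
  obtain ⟨N, hN, rfl⟩ := CStarAlgebra.isStrictlyPositive_iff_eq_star_mul_self.mp
    hD.isStrictlyPositive
  have hNdet : IsUnit N.det := (isUnit_iff_isUnit_det N).mp hN
  obtain ⟨U, hU, -, hUdiag⟩ := exists_unitary_conj_eq_diagonal_eigenvalues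
    (isHermitian_conjTranspose_mul_mul N⁻¹ hQ)
  have whiten : (N⁻¹)ᴴ * (star N * N) * N⁻¹ = 1 := by
    rw [← Matrix.mul_assoc, star_eq_conjTranspose, ← conjTranspose_mul, mul_nonsing_inv N hNdet,
      conjTranspose_one, Matrix.one_mul, mul_nonsing_inv N hNdet]
  have assoc (M : Matrix n n 𝕜) :
      U * (N⁻¹)ᴴ * M * (U * (N⁻¹)ᴴ)ᴴ = U * ((N⁻¹)ᴴ * M * N⁻¹) * Uᴴ := by
    simp only [conjTranspose_mul, conjTranspose_conjTranspose, Matrix.mul_assoc]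
  refine ⟨U * (N⁻¹)ᴴ, ?_, ?_⟩
  · rw [assoc, whiten, Matrix.mul_one, hU]
  · rw [assoc, hUdiag]
    exact isDiag_diagonal _

end MatrixLemmas

section DeterminantBound

theorem det_realign_of_isDiag {R : Type*} [CommRing R]
    {ρ : Matrix (Fin 2 × Fin 2) (Fin 2 × Fin 2) R} (h : ∀ i, (blockAt ρ i i).IsDiag) :
    (realign ρ).det =
      (ρ (0, 0) (0, 0) * ρ (1, 1) (1, 1) - ρ (0, 1) (0, 1) * ρ (1, 0) (1, 0)) *
      (ρ (0, 0) (1, 1) * ρ (1, 1) (0, 0) - ρ (0, 1) (1, 0) * ρ (1, 0) (0, 1)) := by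
  have off_diag (i : Fin 2) {k l : Fin 2} (hkl : k ≠ l) : ρ (i, k) (i, l) = 0 := h i hkl
  have entries : (realign ρ).submatrix finProdFinEquiv.symm finProdFinEquiv.symm =
      !![ρ (0, 0) (0, 0), 0, 0, ρ (0, 1) (0, 1);
         ρ (0, 0) (1, 0), ρ (0, 0) (1, 1), ρ (0, 1) (1, 0), ρ (0, 1) (1, 1);
         ρ (1, 0) (0, 0), ρ (1, 0) (0, 1), ρ (1, 1) (0, 0), ρ (1, 1) (0, 1);
         ρ (1, 0) (1, 0), 0, 0, ρ (1, 1) (1, 1)] := by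
    ext i j
    fin_cases i <;> fin_cases j <;> first | rfl | exact off_diag _ (by decide)
  rw [← det_submatrix_equiv_self finProdFinEquiv.symm (realign ρ), entries]
  simp [det_succ_row_zero, Fin.sum_univ_succ, Fin.succAbove]
  ring

theorem steered_adjugate_traceFst_of_isDiag {R : Type*} [CommRing R]
    {ρ : Matrix (Fin 2 × Fin 2) (Fin 2 × Fin 2) R} (h : ∀ i, (blockAt ρ i i).IsDiag) (i : Fin 2) :
    steered ρ (adjugate (traceFst ρ)) i i =
      ρ (0, 0) (0, 0) * ρ (1, 1) (1, 1) + ρ (0, 1) (0, 1) * ρ (1, 0) (1, 0) +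
        2 * (ρ (i, 0) (i, 0) * ρ (i, 1) (i, 1)) := by
  have off_diag (i : Fin 2) {k l : Fin 2} (hkl : k ≠ l) : ρ (i, k) (i, l) = 0 := h i hkl
  fin_cases i <;>
    simp [steered, traceFst, blockAt, adjugate_fin_two, trace_fin_two, mul_apply, off_diag] <;>
    ring

variable {ρ : Matrix (Fin 2 × Fin 2) (Fin 2 × Fin 2) ℂ}

theorem norm_det_realign_le_of_isDiag (hρ : ρ.PosSemidef) (h : ∀ i, (blockAt ρ i i).IsDiag)
    (i : Fin 2) : ‖(realign ρ).det‖ ≤ ‖steered ρ (adjugate (traceFst ρ)) i i‖ ^ 2 := by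
  set x := ρ (0, 0) (0, 0) * ρ (1, 1) (1, 1)
  set y := ρ (0, 1) (0, 1) * ρ (1, 0) (1, 0)
  have mul_nonneg_diag (p q : Fin 2 × Fin 2) : 0 ≤ ρ p p * ρ q q :=
    mul_nonneg hρ.diag_nonneg hρ.diag_nonneg
  have coherence_le : ‖ρ (0, 0) (1, 1) * ρ (1, 1) (0, 0) - ρ (0, 1) (1, 0) * ρ (1, 0) (0, 1)‖ ≤
      ‖x‖ + ‖y‖ :=
    (norm_sub_le _ _).trans (add_le_add (norm_apply_mul_apply_le_of_posSemidef hρ _ _)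
      (norm_apply_mul_apply_le_of_posSemidef hρ _ _))
  have le_steered : x + y ≤ steered ρ (adjugate (traceFst ρ)) i i := by
    rw [steered_adjugate_traceFst_of_isDiag h]
    exact le_add_of_nonneg_right (mul_nonneg zero_le_two (mul_nonneg_diag _ _))
  calc ‖(realign ρ).det‖ ≤ (‖x‖ + ‖y‖) * (‖x‖ + ‖y‖) := by
        rw [det_realign_of_isDiag h, norm_mul]
        exact mul_le_mul (norm_sub_le _ _) coherence_le (norm_nonneg _) (by positivity)
    _ = ‖x + y‖ ^ 2 := by
        rw [← sq, Complex.norm_add_eq]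
        rw [Complex.arg_eq_zero_iff_zero_le.mpr (mul_nonneg_diag _ _),
          Complex.arg_eq_zero_iff_zero_le.mpr (mul_nonneg_diag _ _)]
    _ ≤ ‖steered ρ (adjugate (traceFst ρ)) i i‖ ^ 2 := by
        gcongr
        exact CStarAlgebra.norm_le_norm_of_nonneg_of_le
          (add_nonneg (mul_nonneg_diag _ _) (mul_nonneg_diag _ _)) le_steered

theorem norm_det_realign_le_sq_norm_steered (hρ : ρ.PosSemidef) (hD : (traceFst ρ).PosDef)
    (i : Fin 2) : ‖(realign ρ).det‖ ≤ ‖steered ρ (adjugate (traceFst ρ)) i i‖ ^ 2 := by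
  obtain ⟨B, hB, hB1⟩ := exists_mul_mul_conjTranspose_eq_one_and_isDiag hD
    (hρ.submatrix (Prod.mk 1)).isHermitian
  set σ := (1 ⊗ₖ B) * ρ * (1 ⊗ₖ B)ᴴ with hσ
  rw [conjTranspose_kronecker, conjTranspose_one] at hσ
  have hblock (j : Fin 2) : blockAt σ j j = B * blockAt ρ j j * Bᴴ := by
    rw [hσ, blockAt_one_kronecker_mul_mul_one_kronecker]
  have htrace : traceFst σ = B * traceFst ρ * Bᴴ := by
    rw [hσ, traceFst_one_kronecker_mul_mul_one_kronecker]
  have hdiag1 : (blockAt σ 1 1).IsDiag := by rw [hblock]; exact hB1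
  have hdiag0 : (blockAt σ 0 0).IsDiag := by
    have : blockAt σ 0 0 = 1 - blockAt σ 1 1 := by
      rw [← hB, ← htrace, traceFst, Fin.sum_univ_two, add_sub_cancel_right]
    rw [this]
    exact isDiag_one.sub hdiag1
  have hscale : 0 < ‖B.det * Bᴴ.det‖ ^ 2 := by
    have hdet : B.det * (traceFst ρ).det * Bᴴ.det = 1 := by rw [← det_mul, ← det_mul, hB, det_one]
    have : B.det * Bᴴ.det ≠ 0 := left_ne_zero_of_mul_eq_one (b := (traceFst ρ).det)
      (by rw [← hdet]; ring)
    positivity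
  refine le_of_mul_le_mul_left ?_ hscale
  calc ‖B.det * Bᴴ.det‖ ^ 2 * ‖(realign ρ).det‖ = ‖(realign σ).det‖ := by
        rw [hσ, det_realign_kronecker_mul_mul_kronecker, det_one, one_mul, mul_one,
          Fintype.card_fin, norm_mul (_ ^ 2), norm_pow]
    _ ≤ ‖steered σ (adjugate (traceFst σ)) i i‖ ^ 2 :=
        norm_det_realign_le_of_isDiag (hρ.mul_mul_conjTranspose_same (1 ⊗ₖ B))
          (Fin.forall_fin_two.mpr ⟨hdiag0, hdiag1⟩) i
    _ = ‖B.det * Bᴴ.det‖ ^ 2 * ‖steered ρ (adjugate (traceFst ρ)) i i‖ ^ 2 := by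
        rw [← mul_pow, ← norm_mul]
        simp only [steered, of_apply]
        rw [← trace_mul_mul_mul_adjugate, ← htrace, ← hblock]

theorem norm_det_realign_le_sq_of_mem_spectrum (hρ : ρ.PosSemidef) (hD : (traceFst ρ).PosDef)
    {x : ℝ} (hx : x ∈ spectrum ℝ (steered ρ (adjugate (traceFst ρ)))) :
    ‖(realign ρ).det‖ ≤ x ^ 2 := by
  have hK : (steered ρ (adjugate (traceFst ρ))).IsHermitian := by
    rw [IsHermitian, conjTranspose_steered, hρ.isHermitian.eq, adjugate_conjTranspose,
      hD.isHermitian.eq]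
  obtain ⟨i, rfl⟩ := hK.spectrum_real_eq_range_eigenvalues ▸ hx
  obtain ⟨U, hU, hU', hUdiag⟩ := exists_unitary_conj_eq_diagonal_eigenvalues hK
  set σ := (U ⊗ₖ 1) * ρ * (U ⊗ₖ 1)ᴴ with hσ
  rw [conjTranspose_kronecker, conjTranspose_one] at hσ
  have htrace : traceFst σ = traceFst ρ := by
    rw [hσ, traceFst_kronecker_one_mul_mul_kronecker_one hU']
  have hsteered : steered σ (adjugate (traceFst σ)) i i = hK.eigenvalues i := by
    rw [htrace, hσ, steered_kronecker_one_mul_mul_kronecker_one, hUdiag, diagonal_apply_eq]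
    rfl
  have hdet : (realign σ).det = (realign ρ).det := by
    rw [hσ, det_realign_kronecker_mul_mul_kronecker, det_one, mul_one, mul_one, ← det_mul, hU,
      det_one, one_pow, one_mul]
  have bound := norm_det_realign_le_sq_norm_steered (hρ.mul_mul_conjTranspose_same (U ⊗ₖ 1))
    (htrace ▸ hD) i
  rwa [hdet, hsteered, Complex.norm_real, Real.norm_eq_abs, sq_abs] at bound

end DeterminantBound

section Pauli

theorem conjTranspose_pauli (μ : Fin 4) : (pauli μ)ᴴ = pauli μ := by
  fin_cases μ <;> ext i j <;> fin_cases i <;> fin_cases j <;> simp [pauli]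

theorem pauli_zero : pauli 0 = 1 := one_fin_two.symm

theorem trace_pauli_mul_pauli (μ ν : Fin 4) :
    (pauli μ * pauli ν).trace = if μ = ν then 2 else 0 := by
  fin_cases μ <;> fin_cases ν <;> norm_num [pauli, trace_fin_two]

theorem smul_one_add_sum_smul_pauli (z : ℂ) (c : Fin 3 → ℂ) :
    z • (1 : Matrix (Fin 2) (Fin 2) ℂ) + ∑ k, c k • pauli k.succ =
      !![z + c 2, c 0 - c 1 * Complex.I; c 0 + c 1 * Complex.I, z - c 2] := by
  ext i j
  fin_cases i <;> fin_cases j <;> simp [Fin.sum_univ_three, pauli, sub_eq_add_neg]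

theorem det_smul_one_add_sum_smul_pauli (z : ℂ) (c : Fin 3 → ℂ) :
    (z • (1 : Matrix (Fin 2) (Fin 2) ℂ) + ∑ k, c k • pauli k.succ).det = z ^ 2 - ∑ k, c k ^ 2 := by
  rw [smul_one_add_sum_smul_pauli, det_fin_two_of, Fin.sum_univ_three]
  linear_combination c 1 ^ 2 * Complex.I_sq

theorem two_smul_eq_sum_trace_mul_pauli_smul (M : Matrix (Fin 2) (Fin 2) ℂ) :
    (2 : ℂ) • M = ∑ μ, (M * pauli μ).trace • pauli μ := by
  rw [Fin.sum_univ_succ, pauli_zero, Matrix.mul_one, smul_one_add_sum_smul_pauli]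
  ext i j
  fin_cases i <;> fin_cases j <;> simp [trace_fin_two, mul_apply, pauli] <;> grind [Complex.I_sq]

theorem two_smul_adjugate (M : Matrix (Fin 2) (Fin 2) ℂ) :
    (2 : ℂ) • adjugate M =
      M.trace • (1 : Matrix (Fin 2) (Fin 2) ℂ) -
        ∑ k : Fin 3, (M * pauli k.succ).trace • pauli k.succ := by
  have h := two_smul_eq_sum_trace_mul_pauli_smul M
  rw [Fin.sum_univ_succ, pauli_zero, Matrix.mul_one] at h
  rw [← sub_eq_of_eq_add' h]
  ext i j
  fin_cases i <;> fin_cases j <;> simp [adjugate_fin_two, trace_fin_two] <;> ring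

theorem norm3_sq (v : Fin 3 → ℝ) : norm3 v ^ 2 = ∑ i, v i ^ 2 :=
  Real.sq_sqrt (Finset.sum_nonneg fun i _ => sq_nonneg (v i))

theorem one_sub_norm3_mem_spectrum (c : Fin 3 → ℝ) :
    1 - norm3 c ∈ spectrum ℝ
      ((1 : Matrix (Fin 2) (Fin 2) ℂ) + ∑ k, (c k : ℂ) • pauli k.succ) := by
  rw [spectrum.mem_iff, isUnit_iff_isUnit_det]
  have shift : algebraMap ℝ (Matrix (Fin 2) (Fin 2) ℂ) (1 - norm3 c) -
      (1 + ∑ k, (c k : ℂ) • pauli k.succ) =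
      (-norm3 c : ℂ) • (1 : Matrix (Fin 2) (Fin 2) ℂ) + ∑ k, (-c k : ℂ) • pauli k.succ := by
    rw [Algebra.algebraMap_eq_smul_one, ← Complex.coe_smul]
    simp only [neg_smul, Finset.sum_neg_distrib]
    push_cast
    module
  have det_eq_zero : (-norm3 c : ℂ) ^ 2 - ∑ k, (-c k : ℂ) ^ 2 = 0 := by
    simp only [neg_sq, sub_eq_zero]
    exact_mod_cast norm3_sq c
  rw [shift, det_smul_one_add_sum_smul_pauli, det_eq_zero]
  exact not_isUnit_zero

end Pauli

section Theta

variable {ρ : Matrix (Fin 2 × Fin 2) (Fin 2 × Fin 2) ℂ}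

theorem ofReal_theta (hρ : ρ.IsHermitian) (μ ν : Fin 4) :
    ((Theta ρ μ ν : ℝ) : ℂ) = (ρ * (pauli μ ⊗ₖ pauli ν)).trace := by
  refine Complex.conj_eq_iff_re.mp ?_
  rw [← Complex.star_def, ← trace_conjTranspose, conjTranspose_mul, hρ.eq, conjTranspose_kronecker,
    conjTranspose_pauli, conjTranspose_pauli, trace_mul_comm]

/-- The change of basis from matrix units to Pauli matrices: its rows are the vectorised Pauli
matrices, with `Fin 4` enumerating the index pairs. -/
def pauliBasis : Matrix (Fin 4) (Fin 4) ℂ :=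
  of fun μ p => vec (pauli μ) (finProdFinEquiv.symm p)

theorem pauliBasis_mul_conjTranspose : pauliBasis * pauliBasisᴴ = (2 : ℂ) • 1 := by
  ext μ ν
  simp only [pauliBasis, mul_apply, conjTranspose_apply, of_apply]
  rw [Equiv.sum_comp finProdFinEquiv.symm fun p => vec (pauli μ) p * star (vec (pauli ν) p)]
  change vec (pauli μ) ⬝ᵥ star (vec (pauli ν)) = _
  rw [dotProduct_comm, star_vec_dotProduct_vec, conjTranspose_pauli, trace_pauli_mul_pauli]
  simp [one_apply, eq_comm]

theorem norm_det_pauliBasis : ‖pauliBasis.det‖ ^ 2 = 16 := by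
  have h := congrArg (fun M => ‖M.det‖) pauliBasis_mul_conjTranspose
  rw [det_mul, det_conjTranspose, norm_mul, norm_star, det_smul, det_one] at h
  rw [sq, h]
  norm_num

theorem map_ofReal_theta (hρ : ρ.IsHermitian) :
    (Theta ρ).map Complex.ofReal = pauliBasis *
      (realign ρ).submatrix finProdFinEquiv.symm finProdFinEquiv.symm * pauliBasisᵀ := by
  ext μ ν
  rw [map_apply, ofReal_theta hρ, trace_mul_kronecker, dotProduct_mulVec]
  simp only [pauliBasis, mul_apply, of_apply, transpose_apply, submatrix_apply, dotProduct, vecMul]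
  rw [← Equiv.sum_comp finProdFinEquiv.symm]
  refine Finset.sum_congr rfl fun q _ => ?_
  rw [← Equiv.sum_comp finProdFinEquiv.symm]

theorem abs_det_theta (hρ : ρ.IsHermitian) : |(Theta ρ).det| = 16 * ‖(realign ρ).det‖ := by
  have h : ((Theta ρ).det : ℂ) = ((Theta ρ).map Complex.ofReal).det :=
    Complex.ofRealHom.map_det (Theta ρ)
  rw [← Real.norm_eq_abs, ← Complex.norm_real, h, map_ofReal_theta hρ, det_mul, det_mul,
    det_transpose, det_submatrix_equiv_self, norm_mul, norm_mul, ← norm_det_pauliBasis]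
  ring

theorem theta_zero_zero (htr : ρ.trace = 1) : Theta ρ 0 0 = 1 := by
  rw [Theta, of_apply, pauli_zero, one_kronecker_one, Matrix.mul_one, htr, Complex.one_re]

theorem trace_traceFst_mul_pauli (hρ : ρ.IsHermitian) (ν : Fin 4) :
    (traceFst ρ * pauli ν).trace = Theta ρ 0 ν := by
  rw [trace_traceFst_mul, ← pauli_zero, ofReal_theta hρ]

theorem two_mul_trace_steered_adjugate_mul_pauli (hρ : ρ.IsHermitian) (μ : Fin 4) :
    2 * (steered ρ (adjugate (traceFst ρ)) * pauli μ).trace =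
      ((Theta ρ μ 0 * Theta ρ 0 0 - ∑ j : Fin 3, Theta ρ μ j.succ * Theta ρ 0 j.succ : ℝ) : ℂ) := by
  have hadj : (2 : ℂ) • adjugate (traceFst ρ) =
      (Theta ρ 0 0 : ℂ) • pauli 0 - ∑ j : Fin 3, (Theta ρ 0 j.succ : ℂ) • pauli j.succ := by
    simp only [two_smul_adjugate, ← trace_traceFst_mul_pauli hρ, pauli_zero, Matrix.mul_one]
  calc 2 * (steered ρ (adjugate (traceFst ρ)) * pauli μ).trace
      = vec (pauli μ) ⬝ᵥ realign ρ *ᵥ vec ((2 : ℂ) • adjugate (traceFst ρ)) := by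
        rw [trace_steered_mul, trace_mul_kronecker, vec_smul, mulVec_smul, dotProduct_smul,
          smul_eq_mul]
    _ = Theta ρ 0 0 * Theta ρ μ 0 - ∑ j : Fin 3, Theta ρ 0 j.succ * (Theta ρ μ j.succ : ℂ) := by
        simp only [hadj, vec_sub, vec_smul, vec_sum, mulVec_sub, mulVec_smul, mulVec_sum,
          dotProduct_sub, dotProduct_smul, dotProduct_sum, smul_eq_mul, ← trace_mul_kronecker,
          ← ofReal_theta hρ]
    _ = _ := by
        push_cast
        simp only [mul_comm]

theorem four_mul_det_traceFst (hρ : ρ.IsHermitian) :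
    4 * (traceFst ρ).det = ((Theta ρ 0 0 ^ 2 - ∑ j : Fin 3, Theta ρ 0 j.succ ^ 2 : ℝ) : ℂ) := by
  have h := two_mul_trace_steered_adjugate_mul_pauli hρ 0
  rw [trace_steered_mul, pauli_zero, ← trace_traceFst_mul, mul_adjugate, trace_smul, trace_one,
    Fintype.card_fin, smul_eq_mul] at h
  simp only [sq]
  linear_combination h

theorem four_smul_steered_adjugate_traceFst (hρ : ρ.IsHermitian) :
    (4 : ℂ) • steered ρ (adjugate (traceFst ρ)) = ∑ μ, ((Theta ρ μ 0 * Theta ρ 0 0 -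
      ∑ j : Fin 3, Theta ρ μ j.succ * Theta ρ 0 j.succ : ℝ) : ℂ) • pauli μ := by
  simp only [← two_mul_trace_steered_adjugate_mul_pauli hρ, mul_smul]
  rw [← Finset.smul_sum, ← two_smul_eq_sum_trace_mul_pauli_smul, smul_smul]
  norm_num

theorem posDef_traceFst (hρ : ρ.PosSemidef)
    (h : 0 < Theta ρ 0 0 ^ 2 - ∑ j : Fin 3, Theta ρ 0 j.succ ^ 2) : (traceFst ρ).PosDef := by
  have psd : (traceFst ρ).PosSemidef := posSemidef_sum _ fun i _ => hρ.submatrix (Prod.mk i)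
  refine psd.posDef_iff_det_ne_zero.mpr (right_ne_zero_of_mul (a := 4) ?_)
  rw [four_mul_det_traceFst hρ.isHermitian]
  exact Complex.ofReal_ne_zero.mpr h.ne'

theorem steered_adjugate_traceFst_eq_smul (hρ : ρ.IsHermitian) (htr : ρ.trace = 1) {s : ℝ}
    (hs : s = 1 - ∑ j : Fin 3, Theta ρ 0 j.succ ^ 2) {c : Fin 3 → ℝ}
    (hc : ∀ k, s * c k =
      Theta ρ k.succ 0 - ∑ j : Fin 3, Theta ρ k.succ j.succ * Theta ρ 0 j.succ) :
    steered ρ (adjugate (traceFst ρ)) = (s / 4) • (1 + ∑ k, (c k : ℂ) • pauli k.succ) := by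
  have h := four_smul_steered_adjugate_traceFst hρ
  simp only [Fin.sum_univ_succ (n := 3), theta_zero_zero htr, mul_one, ← hc, ← sq, ← hs,
    pauli_zero] at h
  refine smul_right_injective _ (four_ne_zero (α := ℂ)) (h.trans ?_)
  simp only [← Complex.coe_smul, smul_smul, smul_add, Finset.smul_sum, Complex.ofReal_mul,
    Complex.ofReal_div, Complex.ofReal_ofNat]
  simp only [← mul_assoc, mul_div_cancel₀ _ (four_ne_zero (α := ℂ))]

theorem abs_det_theta_le (hρ : ρ.PosSemidef) (htr : ρ.trace = 1) {s : ℝ} (hs0 : 0 < s)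
    (hs : s = 1 - ∑ j : Fin 3, Theta ρ 0 j.succ ^ 2) {c : Fin 3 → ℝ}
    (hc : ∀ k, s * c k =
      Theta ρ k.succ 0 - ∑ j : Fin 3, Theta ρ k.succ j.succ * Theta ρ 0 j.succ) :
    |(Theta ρ).det| ≤ s ^ 2 * (1 - norm3 c) ^ 2 := by
  have hD : (traceFst ρ).PosDef := posDef_traceFst hρ (by rwa [theta_zero_zero htr, one_pow, ← hs])
  have mem_spectrum : s / 4 * (1 - norm3 c) ∈ spectrum ℝ (steered ρ (adjugate (traceFst ρ))) := by
    have h := one_sub_norm3_mem_spectrum c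
    rw [steered_adjugate_traceFst_eq_smul hρ.isHermitian htr hs hc,
      spectrum.smul_eq_smul _ _ ⟨_, h⟩]
    exact Set.smul_mem_smul_set h
  calc |(Theta ρ).det| = 16 * ‖(realign ρ).det‖ := abs_det_theta hρ.isHermitian
    _ ≤ 16 * (s / 4 * (1 - norm3 c)) ^ 2 := by
        gcongr
        exact norm_det_realign_le_sq_of_mem_spectrum hρ hD mem_spectrum
    _ = s ^ 2 * (1 - norm3 c) ^ 2 := by ring

end Theta

/-- Physicality bound on steering-ellipsoid volume: for any two-qubit state,
`γ_b⁴ |det Θ(ρ)| ≤ (1 − ‖c_A‖)²`, i.e. `V_A ≤ (4π/3)(1 − ‖c_A‖)²`. -/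
theorem stmt7 (ρ : Matrix (Fin 2 × Fin 2) (Fin 2 × Fin 2) ℂ)
    (hpsd : ρ.PosSemidef) (htr : ρ.trace = 1)
    (b : Fin 3 → ℝ) (hb : ∀ j, b j = Theta ρ 0 j.succ)
    (hb1 : norm3 b < 1)
    (γb : ℝ) (hγb : γb = 1 / Real.sqrt (1 - norm3 b ^ 2))
    (cA : Fin 3 → ℝ)
    (hcA : ∀ i, cA i = γb ^ 2 * (Theta ρ i.succ 0 - ∑ j, Theta ρ i.succ j.succ * b j)) :
    γb ^ 4 * |(Theta ρ).det| ≤ (1 - norm3 cA) ^ 2 := by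
  have hpos : 0 < 1 - norm3 b ^ 2 :=
    sub_pos.mpr ((sq_lt_one_iff₀ (Real.sqrt_nonneg _)).mpr hb1)
  have hγ : γb ^ 2 * (1 - norm3 b ^ 2) = 1 := by
    rw [hγb, div_pow, Real.sq_sqrt hpos.le, one_pow, one_div_mul_cancel hpos.ne']
  have bound : |(Theta ρ).det| ≤ (1 - norm3 b ^ 2) ^ 2 * (1 - norm3 cA) ^ 2 := by
    refine abs_det_theta_le hpsd htr hpos ?_ fun k => ?_
    · simp only [norm3_sq, hb]
    · rw [hcA, ← mul_assoc, mul_comm _ (γb ^ 2), hγ, one_mul]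
      simp only [hb]
  calc γb ^ 4 * |(Theta ρ).det|
      ≤ γb ^ 4 * ((1 - norm3 b ^ 2) ^ 2 * (1 - norm3 cA) ^ 2) := by gcongr
    _ = (γb ^ 2 * (1 - norm3 b ^ 2)) ^ 2 * (1 - norm3 cA) ^ 2 := by ring
    _ = (1 - norm3 cA) ^ 2 := by rw [hγ, one_pow, one_mul]
end
end
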